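/- arXiv:0912.2528 — 2 statements merged into one kernel-verified Lean document; each statement's English description precedes it below -/
import Mathlib

section
/- Let Λ = ℤ_p[[T]] and let Λ[ψ] = ℤ_p[ψ][[T]] where ℤ_p[ψ] is the ring of integers of a finite unramified extension ℚ_p(ψ) of ℚ_p. If M is a finitely generated torsion Λ[ψ]-module whose characteristic ideal over Λ[ψ] is generated by a power series f, then M, viewed as a Λ-module by restriction of scalars, is a finitely generated torsion Λ-module whose characteristic ideal over Λ is generated by the norm N_{ℚ_p(ψ)/ℚ_p}(f) (the product of the Galois conjugates of f applied coefficientwise). -/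
open PowerSeries

/-- `f` generates the characteristic ideal of `M`: by the structure theorem, `M` is
pseudo-isomorphic (a map with finite kernel and cokernel) to a finite direct sum
`⊕ᵢ R/(gᵢ)` with all `gᵢ ≠ 0`, and `f = ∏ᵢ gᵢ`. -/
def IsCharSeries (R : Type*) [CommRing R] (M : Type*) [AddCommGroup M] [Module R M]
    (f : R) : Prop :=
  ∃ (n : ℕ) (g : Fin n → R) (φ : M →ₗ[R] (∀ i, R ⧸ Ideal.span {g i})),
    (∀ i, g i ≠ 0) ∧ f = ∏ i, g i ∧
    Finite (LinearMap.ker φ) ∧ Finite ((∀ i, R ⧸ Ideal.span {g i}) ⧸ LinearMap.range φ)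

section part1
variable {R : Type*} [CommRing R] [IsDomain R] [UniqueFactorizationMonoid R]

/-- The multiplicative set of nonzero elements relatively prime to `D`. -/
def relPrimeSubmonoid (D : R) : Submonoid R where
  carrier := {s | s ≠ 0 ∧ IsRelPrime s D}
  one_mem' := ⟨one_ne_zero, isRelPrime_one_left⟩
  mul_mem' := fun ha hb => ⟨mul_ne_zero ha.1 hb.1, ha.2.mul_left hb.2⟩

theorem relPrimeSubmonoid_le (D : R) : relPrimeSubmonoid D ≤ nonZeroDivisors R :=
  fun _ hs => mem_nonZeroDivisors_of_ne_zero hs.1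

theorem isPrincipalIdealRing_loc (D : R) (hD : D ≠ 0) (K : Type*) [CommRing K] [Algebra R K]
    [IsLocalization (relPrimeSubmonoid D) K] : IsPrincipalIdealRing K := by
  classical
  have : IsDomain K := IsLocalization.isDomain_of_le_nonZeroDivisors K (relPrimeSubmonoid_le D)
  refine IsPrincipalIdealRing.of_prime fun P hP => ?_
  by_cases hP0 : P = ⊥
  · rw [hP0]; infer_instance
  set q : Ideal R := P.comap (algebraMap R K) with hq
  have hmap : q.map (algebraMap R K) = P := IsLocalization.map_under (relPrimeSubmonoid D) K P
  have hq0 : q ≠ ⊥ := by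
    intro h
    rw [h, Ideal.map_bot] at hmap
    exact hP0 hmap.symm
  have hqp : q.IsPrime := Ideal.comap_isPrime _ _
  have key : ∀ x ∈ q, x ≠ 0 → ∃ π, Prime π ∧ π ∣ x ∧ π ∣ D := by
    intro x hx hx0
    by_contra hcon
    push Not at hcon
    have hrel : IsRelPrime x D :=
      (UniqueFactorizationMonoid.isRelPrime_iff_no_prime_factors hx0).2
        (fun {d} h1 h2 h3 => hcon d h3 h1 h2)
    have hu : IsUnit (algebraMap R K x) :=
      IsLocalization.map_units K (⟨x, hx0, hrel⟩ : relPrimeSubmonoid D)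
    exact hP.ne_top (Ideal.eq_top_of_isUnit_mem _ hx hu)
  obtain ⟨x0, hx0q, hx0⟩ := Submodule.exists_mem_ne_zero_of_ne_bot hq0
  have hfac : ∀ π, Prime π → π ∣ D →
      ∃ π' ∈ (UniqueFactorizationMonoid.factors D).toFinset, Associated π π' := by
    intro π hπ hd
    obtain ⟨π', h1, h2⟩ := UniqueFactorizationMonoid.exists_mem_factors_of_dvd hD hπ.irreducible hd
    exact ⟨π', by simpa using h1, h2⟩
  have hsub : (q : Set R) ⊆ ⋃ π ∈ (↑(UniqueFactorizationMonoid.factors D).toFinset : Set R),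
      (Ideal.span {π} : Set R) := by
    intro x hx
    have : ∃ π, Prime π ∧ π ∣ x ∧ π ∣ D := by
      by_cases h0 : x = 0
      · obtain ⟨π, h1, h2, h3⟩ := key x0 hx0q hx0
        exact ⟨π, h1, by simp [h0], h3⟩
      · exact key x hx h0
    obtain ⟨π, h1, h2, h3⟩ := this
    obtain ⟨π', h4, h5⟩ := hfac π h1 h3
    simp only [Set.mem_iUnion]
    exact ⟨π', h4, Ideal.mem_span_singleton.2 (h5.symm.dvd.trans h2)⟩
  rw [Ideal.subset_union_prime (0 : R) 0 (fun i hi _ _ => by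
    have hi' := UniqueFactorizationMonoid.prime_of_factor i (by simpa using hi)
    rwa [Ideal.span_singleton_prime hi'.ne_zero])] at hsub
  obtain ⟨π, hπ, hle⟩ := hsub
  have hπp := UniqueFactorizationMonoid.prime_of_factor π (by simpa using hπ)
  obtain ⟨π', hπ'q, hπ'⟩ := hqp.exists_mem_prime_of_ne_bot hq0
  have hass : Associated π π' :=
    (hπp.dvd_prime_iff_associated hπ').1 (Ideal.mem_span_singleton.1 (hle hπ'q))
  have hqe : q = Ideal.span {π} := by
    refine le_antisymm hle ?_
    rw [Ideal.span_singleton_le_iff_mem]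
    exact Ideal.mem_of_dvd _ hass.symm.dvd hπ'q
  rw [← hmap, hqe, Ideal.map_span, Set.image_singleton]
  exact ⟨⟨_, rfl⟩⟩

theorem exists_decomp (D : R) (x : R) (hx : x ≠ 0) :
    ∃ h t, x = h * t ∧ (∀ s, IsRelPrime s D → IsRelPrime s h) ∧ IsRelPrime t D := by
  induction x using UniqueFactorizationMonoid.induction_on_prime with
  | h₁ => exact absurd rfl hx
  | h₂ x hu => exact ⟨x, 1, by simp, fun s _ => hu.isRelPrime_right, isRelPrime_one_left⟩
  | h₃ a π ha hπ ih =>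
    obtain ⟨h, t, h1, h2, h3⟩ := ih ha
    by_cases hd : π ∣ D
    · refine ⟨π * h, t, by rw [h1]; ring, fun s hs => IsRelPrime.mul_right ?_ (h2 s hs), h3⟩
      refine ((hπ.irreducible.isRelPrime_iff_not_dvd).2 fun hps => ?_).symm
      exact hπ.not_isUnit (hs hps hd)
    · exact ⟨h, π * t, by rw [h1]; ring, h2,
        ((hπ.irreducible.isRelPrime_iff_not_dvd).2 hd).mul_left h3⟩

/-- Smith normal form over a PID in matrix form. -/
theorem smith_matrix {K : Type*} [CommRing K] [IsDomain K] [IsPrincipalIdealRing K]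
    {ι : Type*} [Fintype ι] [DecidableEq ι] (G : Matrix ι ι K) (hG : G.det ≠ 0) :
    ∃ (U V : Matrix ι ι K) (a : ι → K), IsUnit U.det ∧ IsUnit V.det ∧
      U * G = Matrix.diagonal a * V := by
  have hinj : Function.Injective G.toLin' := by
    rw [← LinearMap.ker_eq_bot]
    by_contra hne
    obtain ⟨v, hv, hv0⟩ := Submodule.exists_mem_ne_zero_of_ne_bot hne
    exact hG (Matrix.exists_mulVec_eq_zero_iff.1 ⟨v, hv0, by simpa using hv⟩)
  let e := LinearEquiv.ofInjective G.toLin' hinj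
  obtain ⟨b', a, ab', hab⟩ := Submodule.exists_smith_normal_form_of_rank_eq
    (N := LinearMap.range G.toLin') (Pi.basisFun K ι) (LinearEquiv.finrank_eq e.symm)
  -- `bN` is the basis of the range given by the columns of `G`
  let bN := (Pi.basisFun K ι).map e
  refine ⟨b'.toMatrix (Pi.basisFun K ι), ab'.toMatrix bN, a, ?_, ?_, ?_⟩
  · have := b'.invertibleToMatrix (Pi.basisFun K ι)
    exact Matrix.isUnit_det_of_invertible _
  · have := ab'.invertibleToMatrix bN
    exact Matrix.isUnit_det_of_invertible _
  · ext i j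
    have h1 : G.toLin' (Pi.single j 1) = ∑ k, (ab'.toMatrix bN k j * a k) • b' k := by
      have h2 : ((bN j : LinearMap.range G.toLin') : ι → K) = G.toLin' (Pi.single j 1) := by
        simp [bN, e]
      have h5 := congrArg (Submodule.subtype _) (ab'.sum_toMatrix_smul_self bN j)
      rw [map_sum] at h5
      rw [← h2]
      refine h5.symm.trans (Finset.sum_congr rfl fun k _ => ?_)
      rw [map_smul, Submodule.subtype_apply, hab, mul_smul]
    have h3 : (b'.toMatrix (Pi.basisFun K ι) * G) i j = b'.repr (G.toLin' (Pi.single j 1)) i := by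
      have h4 : G.toLin' (Pi.single j 1) = ∑ k, G k j • (Pi.basisFun K ι) k := by
        ext l; simp [Pi.single_apply]
      rw [h4]
      simp [Matrix.mul_apply, Module.Basis.toMatrix_apply, mul_comm]
    rw [h3, h1]
    simp [Finsupp.single_apply, mul_comm]

theorem prod_mulSingle_aux {S : Type*} [CommMonoid S] {ι : Type*} [Fintype ι] [DecidableEq ι]
    (i0 : ι) (u : S) : ∏ i, (Pi.mulSingle i0 u : ι → S) i = u := by
  rw [Finset.prod_eq_single i0 (fun b _ hb => by simp [hb]) (by simp)]
  simp

theorem exists_matrices {ι : Type*} [Fintype ι] [DecidableEq ι] (G : Matrix ι ι R)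
    (hG : G.det ≠ 0) :
    ∃ (A B : Matrix ι ι R) (h : ι → R), A * G = Matrix.diagonal h * B ∧
      (A.det ≠ 0 ∧ IsRelPrime A.det G.det) ∧ (B.det ≠ 0 ∧ IsRelPrime B.det G.det) ∧
      ∏ i, h i = G.det := by
  obtain ⟨D, hD⟩ : ∃ D, D = G.det := ⟨_, rfl⟩
  rw [← hD] at hG ⊢
  let K := Localization (relPrimeSubmonoid D)
  have : IsDomain K := IsLocalization.isDomain_of_le_nonZeroDivisors K (relPrimeSubmonoid_le D)
  have : IsPrincipalIdealRing K := isPrincipalIdealRing_loc D hG K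
  have hinj : Function.Injective (algebraMap R K) :=
    IsLocalization.injective K (relPrimeSubmonoid_le D)
  have hdet : (G.map (algebraMap R K)).det = algebraMap R K D := by
    exact (RingHom.map_det (algebraMap R K) G).symm.trans (congrArg _ hD.symm)
  obtain ⟨U, V, a, hU, hV, hUV⟩ := smith_matrix (G.map (algebraMap R K)) (by
    rw [hdet]; simpa using (map_ne_zero_iff _ hinj).2 hG)
  have ha0 : ∀ i, a i ≠ 0 := by
    intro i hi
    have := congrArg Matrix.det hUV
    rw [Matrix.det_mul, Matrix.det_mul, Matrix.det_diagonal, Finset.prod_eq_zero (Finset.mem_univ i) hi,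
      zero_mul, hdet] at this
    exact (mul_ne_zero hU.ne_zero ((map_ne_zero_iff _ hinj).2 hG)) this
  have hdec : ∀ i, ∃ h : R, ∃ w : K, IsUnit w ∧ a i = algebraMap R K h * w ∧
      (∀ s, IsRelPrime s D → IsRelPrime s h) := by
    intro i
    obtain ⟨x, s, hxs⟩ := IsLocalization.exists_mk'_eq (relPrimeSubmonoid D) (a i)
    have hx0 : x ≠ 0 := by
      rintro rfl
      exact ha0 i (by rw [← hxs, IsLocalization.mk'_zero])
    obtain ⟨h, t, h1, h2, h3⟩ := exists_decomp D x hx0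
    have ht0 : t ≠ 0 := by rintro rfl; exact hx0 (by simpa using h1)
    refine ⟨h, IsLocalization.mk' K t s, ?_, ?_, h2⟩
    · refine isUnit_of_mul_isUnit_left (y := algebraMap R K s) ?_
      rw [IsLocalization.mk'_spec]
      exact IsLocalization.map_units K (⟨t, ht0, h3⟩ : relPrimeSubmonoid D)
    · rw [← hxs, h1, IsLocalization.mul_mk'_eq_mk'_of_mul]
  choose h w hw haw hrel using hdec
  obtain ⟨s, hs⟩ := IsLocalization.exist_integer_multiples_of_finite (relPrimeSubmonoid D)
    (fun x : (ι × ι) ⊕ (ι × ι) => Sum.elim (fun y => U y.1 y.2)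
      (fun y => (Matrix.diagonal w * V) y.1 y.2) x)
  choose c hc using hs
  let A : Matrix ι ι R := Matrix.of fun i j => c (Sum.inl (i, j))
  let B : Matrix ι ι R := Matrix.of fun i j => c (Sum.inr (i, j))
  have hA : A.map (algebraMap R K) = algebraMap R K s • U := by
    ext i j
    have := hc (Sum.inl (i, j))
    simpa [A, Algebra.smul_def] using this
  have hB : B.map (algebraMap R K) = algebraMap R K s • (Matrix.diagonal w * V) := by
    ext i j
    have := hc (Sum.inr (i, j))
    simpa [B, Algebra.smul_def] using this
  have hsU : IsUnit (algebraMap R K s) := IsLocalization.map_units K s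
  have hmem : ∀ x : R, IsUnit (algebraMap R K x) → x ≠ 0 ∧ IsRelPrime x D := by
    intro x hx
    obtain ⟨m, hm, hxm⟩ := (IsLocalization.algebraMap_isUnit_iff (relPrimeSubmonoid D)).1 hx
    exact ⟨ne_zero_of_dvd_ne_zero hm.1 hxm, hm.2.of_dvd_left hxm⟩
  have hAdet : A.det ≠ 0 ∧ IsRelPrime A.det D := by
    apply hmem
    have : algebraMap R K A.det = (A.map (algebraMap R K)).det := by rw [RingHom.map_det]; rfl
    rw [this, hA, Matrix.det_smul]
    exact (hsU.pow _).mul hU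
  have hBdet : B.det ≠ 0 ∧ IsRelPrime B.det D := by
    apply hmem
    have : algebraMap R K B.det = (B.map (algebraMap R K)).det := by rw [RingHom.map_det]; rfl
    rw [this, hB, Matrix.det_smul, Matrix.det_mul, Matrix.det_diagonal]
    refine (hsU.pow _).mul (IsUnit.mul ?_ hV)
    exact Finset.prod_induction _ IsUnit (fun _ _ => IsUnit.mul) isUnit_one (fun i _ => hw i)
  have hAG : A * G = Matrix.diagonal h * B := by
    apply Matrix.map_injective hinj
    beta_reduce
    rw [Matrix.map_mul, Matrix.map_mul, hA, hB, Matrix.smul_mul, hUV, Matrix.mul_smul,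
      ← Matrix.mul_assoc, Matrix.diagonal_map (map_zero _), Matrix.diagonal_mul_diagonal]
    congr 3
    ext i
    exact haw i
  have hdets : A.det * D = (∏ i, h i) * B.det := by
    have := congrArg Matrix.det hAG
    rwa [Matrix.det_mul, Matrix.det_mul, Matrix.det_diagonal, ← hD] at this
  have hass : Associated (∏ i, h i) D := by
    apply associated_of_dvd_dvd
    · have h1 : IsRelPrime A.det (∏ i, h i) := IsRelPrime.prod_right fun i _ => hrel i _ hAdet.2
      exact h1.symm.dvd_of_dvd_mul_left ⟨_, hdets⟩
    · exact hBdet.2.symm.dvd_of_dvd_mul_right ⟨A.det, by rw [← hdets, mul_comm]⟩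
  rcases isEmpty_or_nonempty ι with hι | ⟨⟨i0⟩⟩
  · refine ⟨A, B, h, hAG, hAdet, hBdet, ?_⟩
    simp [hD]
  · obtain ⟨u, hu⟩ := hass
    refine ⟨A, Matrix.diagonal (Pi.mulSingle i0 (↑u⁻¹ : R) : ι → R) * B,
      fun i => h i * (Pi.mulSingle i0 (↑u : R) : ι → R) i, ?_, hAdet, ?_, ?_⟩
    · rw [← Matrix.mul_assoc, Matrix.diagonal_mul_diagonal, hAG]
      congr 2
      ext i
      by_cases hi : i = i0
      · subst hi; simp [mul_assoc]
      · simp [hi]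
    · rw [Matrix.det_mul, Matrix.det_diagonal, prod_mulSingle_aux]
      refine ⟨mul_ne_zero (Units.ne_zero _) hBdet.1, ?_⟩
      rw [isRelPrime_mul_unit_left_left (Units.isUnit _)]
      exact hBdet.2
    · rw [Finset.prod_mul_distrib, prod_mulSingle_aux, hu]
end part1

section part2

theorem finite_of_killed {R : Type*} [CommRing R] {N : Type*} [AddCommGroup N] [Module R N]
    [Module.Finite R N] (a b : R) (hfin : Finite (R ⧸ Ideal.span {a, b}))
    (ha : ∀ x : N, a • x = 0) (hb : ∀ x : N, b • x = 0) : Finite N := by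
  have ht : Module.IsTorsionBySet R N (Ideal.span {a, b} : Ideal R) := by
    rw [← Module.isTorsionBySet_iff_is_torsion_by_span]
    rintro x ⟨c, hc⟩
    rcases hc with rfl | rfl
    · exact ha x
    · exact hb x
  let _ : Module (R ⧸ Ideal.span {a, b}) N := ht.module
  have : IsScalarTower R (R ⧸ Ideal.span {a, b}) N := ht.isScalarTower
  have : Module.Finite (R ⧸ Ideal.span {a, b}) N :=
    Module.Finite.of_restrictScalars_finite R _ N
  exact Module.finite_of_finite (R ⧸ Ideal.span {a, b})

theorem exists_pseudo {R : Type*} [CommRing R] [IsDomain R] [UniqueFactorizationMonoid R]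
    [IsNoetherianRing R]
    (H : ∀ a b : R, a ≠ 0 → b ≠ 0 → IsRelPrime a b → Finite (R ⧸ Ideal.span {a, b}))
    {ι : Type*} [Fintype ι] [DecidableEq ι] (G : Matrix ι ι R) (hG : G.det ≠ 0)
    {T : Type*} [AddCommGroup T] [Module R T] (π : (ι → R) →ₗ[R] T)
    (hπ : Function.Surjective π) (hker : ∀ x, π x = 0 ↔ ∃ y, G.mulVec y = x) :
    ∃ (h : ι → R) (θ : T →ₗ[R] (∀ i, R ⧸ Ideal.span {h i})),
      (∀ i, h i ≠ 0) ∧ ∏ i, h i = G.det ∧ Finite (LinearMap.ker θ) ∧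
      Finite ((∀ i, R ⧸ Ideal.span {h i}) ⧸ LinearMap.range θ) := by
  obtain ⟨A, B, h, hAG, hA, hB, hprod⟩ := exists_matrices G hG
  let ψ : (ι → R) →ₗ[R] (∀ i, R ⧸ Ideal.span {h i}) :=
    LinearMap.pi fun i => (Submodule.mkQ (Ideal.span {h i})) ∘ₗ LinearMap.proj i ∘ₗ A.mulVecLin
  have hψ : ∀ x i, ψ x i = Submodule.Quotient.mk (A.mulVec x i) := fun x i => rfl
  have hψ0 : ∀ x, ψ x = 0 ↔ ∃ y : ι → R, A.mulVec x = fun i => h i * y i := by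
    intro x
    constructor
    · intro hx
      have : ∀ i, ∃ y, A.mulVec x i = h i * y := by
        intro i
        have := congrFun hx i
        rw [hψ, Pi.zero_apply, Submodule.Quotient.mk_eq_zero, Ideal.mem_span_singleton] at this
        exact this
      choose y hy using this
      exact ⟨y, funext hy⟩
    · rintro ⟨y, hy⟩
      ext i
      rw [hψ, hy, Pi.zero_apply, Submodule.Quotient.mk_eq_zero, Ideal.mem_span_singleton]
      exact dvd_mul_right _ _
  have hdiag : ∀ y : ι → R, (Matrix.diagonal h).mulVec y = fun i => h i * y i := by
    intro y; ext i; exact Matrix.mulVec_diagonal _ _ _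
  have hkle : LinearMap.ker π ≤ LinearMap.ker ψ := by
    intro x hx
    obtain ⟨y, rfl⟩ := (hker x).1 hx
    refine (hψ0 _).2 ⟨B.mulVec y, ?_⟩
    rw [Matrix.mulVec_mulVec, hAG, ← Matrix.mulVec_mulVec, hdiag]
  let θ : T →ₗ[R] (∀ i, R ⧸ Ideal.span {h i}) :=
    ((LinearMap.ker π).liftQ ψ hkle) ∘ₗ (π.quotKerEquivOfSurjective hπ).symm.toLinearMap
  have hθ : ∀ x, θ (π x) = ψ x := by
    intro x
    have : (π.quotKerEquivOfSurjective hπ).symm (π x) = Submodule.Quotient.mk x := by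
      rw [LinearEquiv.symm_apply_eq]; rfl
    simp [θ, this]
  have hfinT : Module.Finite R T := Module.Finite.of_surjective π hπ
  refine ⟨h, θ, fun i hi => hG ?_, hprod, ?_, ?_⟩
  · rw [← hprod, Finset.prod_eq_zero (Finset.mem_univ i) hi]
  · refine finite_of_killed B.det G.det (H _ _ hB.1 hG hB.2) ?_ ?_
    · rintro ⟨t, ht⟩
      obtain ⟨x, rfl⟩ := hπ t
      rw [LinearMap.mem_ker, hθ, hψ0] at ht
      obtain ⟨y, hy⟩ := ht
      ext
      change B.det • π x = 0
      rw [← map_smul, hker]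
      refine ⟨B.adjugate.mulVec y, ?_⟩
      rw [← sub_eq_zero]
      refine Matrix.eq_zero_of_mulVec_eq_zero hA.1 ?_
      rw [Matrix.mulVec_sub, Matrix.mulVec_mulVec, Matrix.mulVec_smul, hy, hAG,
        ← Matrix.mulVec_mulVec, Matrix.mulVec_mulVec _ B, Matrix.mul_adjugate, ← hdiag,
        Matrix.smul_mulVec, Matrix.one_mulVec, Matrix.mulVec_smul, sub_self]
    · rintro ⟨t, ht⟩
      obtain ⟨x, rfl⟩ := hπ t
      ext
      change G.det • π x = 0
      rw [← map_smul, hker]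
      refine ⟨G.adjugate.mulVec x, ?_⟩
      rw [Matrix.mulVec_mulVec, Matrix.mul_adjugate, Matrix.smul_mulVec, Matrix.one_mulVec]
  · have hlift : ∀ z : (∀ i, R ⧸ Ideal.span {h i}), ∃ w : ι → R,
        z = fun i => Submodule.Quotient.mk (w i) := by
      intro z
      have : ∀ i, ∃ w : R, Submodule.Quotient.mk w = z i :=
        fun i => Submodule.Quotient.mk_surjective _ (z i)
      choose w hw using this
      exact ⟨w, funext fun i => (hw i).symm⟩
    refine finite_of_killed A.det G.det (H _ _ hA.1 hG hA.2) ?_ ?_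
    · intro z
      obtain ⟨z, rfl⟩ := Submodule.Quotient.mk_surjective _ z
      obtain ⟨w, rfl⟩ := hlift z
      rw [← Submodule.Quotient.mk_smul, Submodule.Quotient.mk_eq_zero]
      refine ⟨π (A.adjugate.mulVec w), ?_⟩
      rw [hθ]
      ext i
      rw [hψ, Matrix.mulVec_mulVec, Matrix.mul_adjugate, Matrix.smul_mulVec, Matrix.one_mulVec]
      rfl
    · intro z
      obtain ⟨z, rfl⟩ := Submodule.Quotient.mk_surjective _ z
      obtain ⟨w, rfl⟩ := hlift z
      rw [← Submodule.Quotient.mk_smul, Submodule.Quotient.mk_eq_zero]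
      convert Submodule.zero_mem _
      ext i
      change Submodule.Quotient.mk (G.det • w i) = 0
      rw [Submodule.Quotient.mk_eq_zero, Ideal.mem_span_singleton, ← hprod, smul_eq_mul]
      exact (Finset.dvd_prod_of_mem h (Finset.mem_univ i)).mul_right _

theorem finite_ker_comp {R : Type*} [Ring R] {M N P : Type*} [AddCommGroup M] [AddCommGroup N]
    [AddCommGroup P] [Module R M] [Module R N] [Module R P] (φ : M →ₗ[R] N) (θ : N →ₗ[R] P)
    [hφ : Finite (LinearMap.ker φ)] [hθ : Finite (LinearMap.ker θ)] :
    Finite (LinearMap.ker (θ ∘ₗ φ)) := by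
  have hle : LinearMap.ker φ ≤ LinearMap.ker (θ ∘ₗ φ) := LinearMap.ker_le_ker_comp φ θ
  let f : LinearMap.ker (θ ∘ₗ φ) →ₗ[R] LinearMap.ker θ := φ.restrict (fun x hx => hx)
  have hk : Finite (LinearMap.ker f) := by
    refine Finite.of_injective
      (fun x => (⟨x.1.1, congrArg Subtype.val x.2⟩ : LinearMap.ker φ)) ?_
    intro x y hxy
    have h := congrArg (fun z : LinearMap.ker φ => (z : M)) hxy
    exact Subtype.ext (Subtype.ext h)
  have hq : Finite (LinearMap.ker (θ ∘ₗ φ) ⧸ LinearMap.ker f) :=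
    Finite.of_equiv _ f.quotKerEquivRange.symm.toEquiv
  exact @Finite.of_addSubgroup_quotient _ _ (LinearMap.ker f).toAddSubgroup hk hq

theorem finite_coker_comp {R : Type*} [Ring R] {M N P : Type*} [AddCommGroup M] [AddCommGroup N]
    [AddCommGroup P] [Module R M] [Module R N] [Module R P] (φ : M →ₗ[R] N) (θ : N →ₗ[R] P)
    [hφ : Finite (N ⧸ LinearMap.range φ)] [hθ : Finite (P ⧸ LinearMap.range θ)] :
    Finite (P ⧸ LinearMap.range (θ ∘ₗ φ)) := by
  let f : (N ⧸ LinearMap.range φ) →ₗ[R] P ⧸ LinearMap.range (θ ∘ₗ φ) :=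
    Submodule.mapQ _ _ θ (by rintro _ ⟨x, rfl⟩; exact ⟨x, rfl⟩)
  have hk : Finite (LinearMap.range f) := Finite.of_surjective _ f.surjective_rangeRestrict
  let g : (P ⧸ LinearMap.range θ) →ₗ[R]
      ((P ⧸ LinearMap.range (θ ∘ₗ φ)) ⧸ LinearMap.range f) :=
    Submodule.mapQ _ _ (Submodule.mkQ _) (by
      rintro _ ⟨x, rfl⟩; exact ⟨Submodule.Quotient.mk x, rfl⟩)
  have hg : Function.Surjective g := by
    intro z
    obtain ⟨z, rfl⟩ := Submodule.Quotient.mk_surjective _ z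
    obtain ⟨z, rfl⟩ := Submodule.Quotient.mk_surjective _ z
    exact ⟨Submodule.Quotient.mk z, rfl⟩
  have hq : Finite ((P ⧸ LinearMap.range (θ ∘ₗ φ)) ⧸ LinearMap.range f) :=
    Finite.of_surjective g hg
  exact @Finite.of_addSubgroup_quotient _ _ (LinearMap.range f).toAddSubgroup hk hq

theorem finite_ker_pi {R : Type*} [Ring R] {ι : Type*} [Finite ι] {N P : ι → Type*}
    [∀ i, AddCommGroup (N i)] [∀ i, AddCommGroup (P i)] [∀ i, Module R (N i)]
    [∀ i, Module R (P i)] (θ : ∀ i, N i →ₗ[R] P i) [∀ i, Finite (LinearMap.ker (θ i))] :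
    Finite (LinearMap.ker (LinearMap.pi fun i => θ i ∘ₗ LinearMap.proj i :
      (∀ i, N i) →ₗ[R] (∀ i, P i))) := by
  refine Finite.of_injective (β := ∀ i, LinearMap.ker (θ i))
    (fun x i => ⟨x.1 i, congrFun x.2 i⟩) ?_
  intro x y hxy
  refine Subtype.ext (funext fun i => ?_)
  exact congrArg Subtype.val (congrFun hxy i)

theorem finite_coker_pi {R : Type*} [Ring R] {ι : Type*} [Finite ι] {N P : ι → Type*}
    [∀ i, AddCommGroup (N i)] [∀ i, AddCommGroup (P i)] [∀ i, Module R (N i)]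
    [∀ i, Module R (P i)] (θ : ∀ i, N i →ₗ[R] P i)
    [∀ i, Finite (P i ⧸ LinearMap.range (θ i))] :
    Finite ((∀ i, P i) ⧸ LinearMap.range (LinearMap.pi fun i => θ i ∘ₗ LinearMap.proj i :
      (∀ i, N i) →ₗ[R] (∀ i, P i))) := by
  set Θ := (LinearMap.pi fun i => θ i ∘ₗ LinearMap.proj i : (∀ i, N i) →ₗ[R] (∀ i, P i)) with hΘ
  let f : (∀ i, P i) →ₗ[R] ∀ i, P i ⧸ LinearMap.range (θ i) :=
    LinearMap.pi fun i => Submodule.mkQ _ ∘ₗ LinearMap.proj i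
  have hf : ∀ x, f x = 0 → x ∈ LinearMap.range Θ := by
    intro x hx
    have : ∀ i, ∃ y, θ i y = x i := fun i =>
      (Submodule.Quotient.mk_eq_zero _).1 (congrFun hx i)
    choose y hy using this
    exact ⟨y, funext hy⟩
  have hle : LinearMap.range Θ ≤ LinearMap.ker f := by
    rintro _ ⟨y, rfl⟩
    ext i
    exact (Submodule.Quotient.mk_eq_zero _).2 ⟨y i, rfl⟩
  refine Finite.of_injective ((LinearMap.range Θ).liftQ f hle) ?_
  rw [← LinearMap.ker_eq_bot, Submodule.ker_liftQ_eq_bot]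
  exact fun x hx => hf x hx

/-- Coprime elements of a Noetherian local UFD of dimension at most two with finite residue field. -/
theorem finite_quot_of_relPrime {R : Type*} [CommRing R] [IsDomain R]
    [UniqueFactorizationMonoid R] [IsNoetherianRing R] [IsLocalRing R]
    [Finite (IsLocalRing.ResidueField R)] (hht : (IsLocalRing.maximalIdeal R).height ≤ 2)
    (a b : R) (ha : a ≠ 0) (hab : IsRelPrime a b) : Finite (R ⧸ Ideal.span {a, b}) := by
  set m := IsLocalRing.maximalIdeal R
  set I := Ideal.span {a, b} with hI
  have haI : a ∈ I := Ideal.subset_span (by simp)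
  have hbI : b ∈ I := Ideal.subset_span (by simp)
  have hprime : ∀ q : Ideal R, q.IsPrime → I ≤ q → m ≤ q := by
    intro q hq hIq
    obtain ⟨π, hπ, hπa, hπq⟩ : ∃ π, Prime π ∧ π ∣ a ∧ π ∈ q := by
      have := UniqueFactorizationMonoid.factors_prod ha
      have hmem : (UniqueFactorizationMonoid.factors a).prod ∈ q :=
        Ideal.mem_of_dvd _ this.symm.dvd (hIq haI)
      obtain ⟨π, h1, h2⟩ := (hq.multiset_prod_mem_iff_exists_mem _).1 hmem
      exact ⟨π, UniqueFactorizationMonoid.prime_of_factor π h1,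
        UniqueFactorizationMonoid.dvd_of_mem_factors h1, h2⟩
    have hπb : ¬ π ∣ b := fun h => hπ.not_isUnit (hab hπa h)
    have hP : (Ideal.span {π}).IsPrime := (Ideal.span_singleton_prime hπ.ne_zero).2 hπ
    have h1 : (⊥ : Ideal R) < Ideal.span {π} := by
      rw [bot_lt_iff_ne_bot, Ne, Ideal.span_singleton_eq_bot]; exact hπ.ne_zero
    have h2 : Ideal.span {π} < q := by
      refine lt_of_le_of_ne ((Ideal.span_singleton_le_iff_mem _).2 hπq) fun h => hπb ?_
      rw [← Ideal.mem_span_singleton, h]; exact hIq hbI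
    by_contra hcon
    have h3 : q < m := lt_of_le_of_ne (IsLocalRing.le_maximalIdeal hq.ne_top)
      (fun h => hcon h.ge)
    have hb : (⊥ : Ideal R).IsPrime := Ideal.isPrime_bot
    have e1 := Ideal.height_add_one_le_of_lt_of_isPrime h1
    have e2 := Ideal.height_add_one_le_of_lt_of_isPrime h2
    have e3 := Ideal.height_add_one_le_of_lt_of_isPrime h3
    have : (3 : ℕ∞) ≤ 2 := by
      calc (3 : ℕ∞) = 0 + 1 + 1 + 1 := by norm_num
        _ ≤ (⊥ : Ideal R).height + 1 + 1 + 1 := by gcongr; exact zero_le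
        _ ≤ (Ideal.span {π}).height + 1 + 1 := by gcongr
        _ ≤ q.height + 1 := by gcongr
        _ ≤ _ := e3.trans hht
    exact absurd this (by decide)
  have hrad : m ≤ I.radical := by
    rw [Ideal.radical_eq_sInf]
    exact le_sInf fun q hq => hprime q hq.2 hq.1
  obtain ⟨k, hk⟩ := Ideal.exists_pow_le_of_le_radical_of_fg hrad (IsNoetherian.noetherian _)
  have : Finite (R ⧸ m) := ‹Finite (IsLocalRing.ResidueField R)›
  have : Finite (R ⧸ m ^ k) := Ideal.finite_quotient_pow (IsNoetherian.noetherian _) k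
  exact Finite.of_surjective _ (Ideal.Quotient.factor_surjective hk)

end part2

section part3
open PowerSeries

theorem lambda_finite_quot (p : ℕ) [Fact p.Prime] (a b : PowerSeries ℤ_[p]) (ha : a ≠ 0)
    (hab : IsRelPrime a b) : Finite (PowerSeries ℤ_[p] ⧸ Ideal.span {a, b}) := by
  let ev : PowerSeries ℤ_[p] →+* ZMod p :=
    (PadicInt.toZMod (p := p)).comp (PowerSeries.constantCoeff (R := ℤ_[p]))
  have hev : Function.Surjective ev := by
    intro z
    exact ⟨(z.val : PowerSeries ℤ_[p]), by rw [map_natCast]; exact ZMod.natCast_zmod_val z⟩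
  have hmax : (RingHom.ker ev).IsMaximal := RingHom.ker_isMaximal_of_surjective ev hev
  have hm : RingHom.ker ev = IsLocalRing.maximalIdeal (PowerSeries ℤ_[p]) :=
    IsLocalRing.eq_maximalIdeal hmax
  have hres : Finite (IsLocalRing.ResidueField (PowerSeries ℤ_[p])) := by
    change Finite (PowerSeries ℤ_[p] ⧸ IsLocalRing.maximalIdeal (PowerSeries ℤ_[p]))
    rw [← hm]
    exact Finite.of_injective _ (RingHom.kerLift_injective ev)
  have hspan : IsLocalRing.maximalIdeal (PowerSeries ℤ_[p]) =
      Ideal.span {(p : PowerSeries ℤ_[p]), PowerSeries.X} := by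
    rw [← hm]
    apply le_antisymm
    · intro f hf
      have h0 : PowerSeries.constantCoeff f ∈ RingHom.ker (PadicInt.toZMod (p := p)) := hf
      rw [PadicInt.ker_toZMod, PadicInt.maximalIdeal_eq_span_p, Ideal.mem_span_singleton] at h0
      obtain ⟨c, hc⟩ := h0
      obtain ⟨g, hg⟩ : (PowerSeries.X : PowerSeries ℤ_[p]) ∣
          f - PowerSeries.C (PowerSeries.constantCoeff f) := by
        rw [PowerSeries.X_dvd_iff]; simp
      rw [Ideal.mem_span_pair]
      refine ⟨PowerSeries.C c, g, ?_⟩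
      have : PowerSeries.C (PowerSeries.constantCoeff f) =
          (p : PowerSeries ℤ_[p]) * PowerSeries.C c := by
        rw [hc, map_mul, map_natCast]
      rw [this] at hg
      linear_combination -hg
    · rw [Ideal.span_le]
      rintro x (rfl | rfl)
      · change ev _ = 0
        rw [map_natCast]; simp
      · change ev _ = 0
        simp [ev]
  refine finite_quot_of_relPrime ?_ a b ha hab
  have h2 : IsLocalRing.maximalIdeal (PowerSeries ℤ_[p]) ∈
      (Ideal.span {(p : PowerSeries ℤ_[p]), PowerSeries.X}).minimalPrimes := by
    rw [← hspan, Ideal.minimalPrimes_eq_subsingleton_self]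
    simp
  refine (Ideal.height_le_card_of_mem_minimalPrimes_span (Set.toFinite _) h2).trans ?_
  have h3 : ({(p : PowerSeries ℤ_[p]), PowerSeries.X} : Set (PowerSeries ℤ_[p])).ncard ≤ 2 :=
    (Set.ncard_insert_le _ _).trans (by rw [Set.ncard_singleton])
  exact_mod_cast h3

/-- A basis of `O` over `A` gives coordinates on `O⟦X⟧` over `A⟦X⟧`. -/
noncomputable def psEquiv {A O ι : Type*} [CommRing A] [CommRing O] [Algebra A O] [Fintype ι]
    (b : Module.Basis ι A O) : PowerSeries O ≃ₗ[PowerSeries A] (ι → PowerSeries A) where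
  toFun f i := PowerSeries.mk fun n => b.repr (PowerSeries.coeff n f) i
  map_add' f g := by
    ext i n
    simp
  map_smul' a f := by
    ext i n
    have h1 : a • f = PowerSeries.map (algebraMap A O) a * f := rfl
    rw [h1]
    simp only [PowerSeries.coeff_mk, PowerSeries.coeff_mul, PowerSeries.coeff_map,
      RingHom.id_apply, Pi.smul_apply, smul_eq_mul, ← Algebra.smul_def, map_sum, map_smul,
      Finsupp.coe_finsetSum, Finset.sum_apply, Finsupp.smul_apply]
  invFun v := PowerSeries.mk fun n => ∑ i, PowerSeries.coeff n (v i) • b i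
  left_inv f := by
    ext n
    simp [b.sum_repr]
  right_inv v := by
    ext i n
    classical
    simp only [PowerSeries.coeff_mk, map_sum, map_smul, Module.Basis.repr_self,
      Finsupp.coe_finsetSum, Finset.sum_apply, Finsupp.smul_apply, Finsupp.single_apply,
      smul_eq_mul, mul_ite, mul_one, mul_zero]
    simp

noncomputable def psBasis {A O ι : Type*} [CommRing A] [CommRing O] [Algebra A O] [Fintype ι]
    (b : Module.Basis ι A O) : Module.Basis ι (PowerSeries A) (PowerSeries O) :=
  Module.Basis.ofEquivFun (psEquiv b)

theorem psBasis_apply {A O ι : Type*} [CommRing A] [CommRing O] [Algebra A O] [Fintype ι]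
    (b : Module.Basis ι A O) (i : ι) : psBasis b i = PowerSeries.C (b i) := by
  classical
  apply (psEquiv b).injective
  rw [psBasis, Module.Basis.coe_ofEquivFun, LinearEquiv.apply_symm_apply]
  ext j n
  by_cases hij : i = j
  · subst hij
    by_cases hn : n = 0
    · subst hn; simp [psEquiv]
    · simp [psEquiv, PowerSeries.coeff_C, PowerSeries.coeff_one, hn]
  · by_cases hn : n = 0
    · subst hn; simp [psEquiv, hij, Pi.single_apply, Ne.symm hij]
    · simp [psEquiv, PowerSeries.coeff_C, PowerSeries.coeff_one, hn, Pi.single_apply, Ne.symm hij]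

theorem map_det_eq_prod {A O ι : Type*} [CommRing A] [CommRing O] [IsDomain O] [Algebra A O]
    [Fintype ι] [DecidableEq ι] [Fintype (O ≃ₐ[A] O)] (e : (O ≃ₐ[A] O) ≃ ι)
    (b : Module.Basis ι A O) (g : PowerSeries O) :
    PowerSeries.map (algebraMap A O) (Algebra.leftMulMatrix (psBasis b) g).det =
      ∏ σ : O ≃ₐ[A] O, PowerSeries.map (σ : O →+* O) g := by
  set G := Algebra.leftMulMatrix (psBasis b) g
  -- the matrix of conjugates of the basis
  let C0 : Matrix ι ι O := Matrix.of fun k i => e.symm k (b i)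
  have hC0 : C0.det ≠ 0 := by
    intro h0
    obtain ⟨v, hv0, hv⟩ := Matrix.exists_vecMul_eq_zero_iff.2 h0
    have hli := linearIndependent_monoidHom O O
    have hinj : Function.Injective
        (fun k : ι => ((e.symm k : O ≃ₐ[A] O) : O →* O)) := by
      intro k l hkl
      apply e.symm.injective
      ext x
      exact DFunLike.congr_fun hkl x
    have hli2 := hli.comp _ hinj
    rw [Fintype.linearIndependent_iff] at hli2
    apply hv0
    ext k
    refine hli2 v ?_ k
    have hlin : (∑ k, v k • ((e.symm k : O ≃ₐ[A] O) : O →ₗ[A] O)) = 0 := by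
      refine b.ext fun i => ?_
      have := congrFun hv i
      simpa [Matrix.vecMul, dotProduct, C0] using this
    ext x
    have := LinearMap.congr_fun hlin x
    simpa using this
  let CC : Matrix ι ι (PowerSeries O) := C0.map (PowerSeries.C (R := O))
  have hCC : CC.det ≠ 0 := by
    have : CC.det = PowerSeries.C C0.det := by rw [RingHom.map_det]; rfl
    rw [this]
    exact (map_ne_zero_iff _ PowerSeries.C_injective).2 hC0
  have hmain : Matrix.diagonal (fun k => PowerSeries.map ((e.symm k : O ≃ₐ[A] O) : O →+* O) g) * CC =
      CC * G.map (PowerSeries.map (algebraMap A O)) := by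
    ext1 k j
    rw [Matrix.diagonal_mul, Matrix.mul_apply]
    have h1 : g * psBasis b j = ∑ i, G i j • psBasis b i := by
      have := (psBasis b).sum_repr (g * psBasis b j)
      rw [← this]
      refine Finset.sum_congr rfl fun i _ => ?_
      exact congrArg (· • psBasis b i)
        (Algebra.leftMulMatrix_eq_repr_mul (psBasis b) g i j).symm
    have h2 := congrArg (PowerSeries.map ((e.symm k : O ≃ₐ[A] O) : O →+* O)) h1
    rw [map_mul, map_sum] at h2
    simp only [Algebra.smul_def, map_mul, psBasis_apply, PowerSeries.map_C,
      PowerSeries.algebraMap_apply''] at h2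
    refine h2.trans (Finset.sum_congr rfl fun i _ => ?_)
    rw [mul_comm]
    congr 1
    ext n
    simp
  have hdet := congrArg Matrix.det hmain
  rw [Matrix.det_mul, Matrix.det_mul, Matrix.det_diagonal, mul_comm] at hdet
  have h3 := mul_left_cancel₀ hCC hdet
  rw [RingHom.map_det]
  refine h3.symm.trans ?_
  exact Fintype.prod_equiv e.symm _ _ (fun _ => rfl)

end part3

/-- let `O = ℤ_p[ψ]` be the ring of integers of a finite unramified extension
`ℚ_p(ψ)/ℚ_p` (formalized: `O` is a local domain, finite and free over `ℤ_p`, whose maximal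
ideal is generated by `p`, and with a full group of `ℤ_p`-algebra automorphisms — the
Galois group).  If `M` is a finitely generated torsion module over `Λ[ψ] = O[[T]]` whose
characteristic ideal is generated by `f`, then `M`, viewed as a module over
`Λ = ℤ_p[[T]]` by restriction of scalars, is a finitely generated torsion `Λ`-module whose
characteristic ideal is generated by the norm `N_{ℚ_p(ψ)/ℚ_p}(f) = ∏_σ σ(f)`, the product
of the Galois conjugates of `f` applied coefficientwise. -/
theorem charSeries_of_restriction_of_scalars (p : ℕ) [Fact p.Prime]
    (O : Type*) [CommRing O] [IsDomain O] [IsLocalRing O] [Algebra ℤ_[p] O]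
    [Module.Finite ℤ_[p] O] [Module.Free ℤ_[p] O]
    (hunram : IsLocalRing.maximalIdeal O = Ideal.span {(p : O)})
    [Fintype (O ≃ₐ[ℤ_[p]] O)]
    (hgalois : Fintype.card (O ≃ₐ[ℤ_[p]] O) = Module.finrank ℤ_[p] O)
    (M : Type*) [AddCommGroup M]
    [Module (PowerSeries O) M] [Module (PowerSeries ℤ_[p]) M]
    (hcompat : ∀ (a : PowerSeries ℤ_[p]) (m : M),
      a • m = (PowerSeries.map (algebraMap ℤ_[p] O) a) • m)
    [Module.Finite (PowerSeries O) M] (htors : Module.IsTorsion (PowerSeries O) M)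
    (f : PowerSeries O) (hchar : IsCharSeries (PowerSeries O) M f) :
    Module.Finite (PowerSeries ℤ_[p]) M ∧ Module.IsTorsion (PowerSeries ℤ_[p]) M ∧
    ∃ Nf : PowerSeries ℤ_[p],
      PowerSeries.map (algebraMap ℤ_[p] O) Nf =
        ∏ σ : O ≃ₐ[ℤ_[p]] O, PowerSeries.map (σ : O →+* O) f ∧
      IsCharSeries (PowerSeries ℤ_[p]) M Nf := by
  classical
  let Λ := PowerSeries ℤ_[p]
  have htower : IsScalarTower (PowerSeries ℤ_[p]) (PowerSeries O) M := by
    refine ⟨fun a x m => ?_⟩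
    have h1 : a • x = PowerSeries.map (algebraMap ℤ_[p] O) a * x := rfl
    rw [h1, mul_smul, hcompat]
  let b := Module.finBasis ℤ_[p] O
  let e : (O ≃ₐ[ℤ_[p]] O) ≃ Fin (Module.finrank ℤ_[p] O) :=
    Fintype.equivOfCardEq (by rw [hgalois, Fintype.card_fin])
  let N : PowerSeries O → PowerSeries ℤ_[p] :=
    fun g => (Algebra.leftMulMatrix (psBasis b) g).det
  have hN : ∀ g, PowerSeries.map (algebraMap ℤ_[p] O) (N g) =
      ∏ σ : O ≃ₐ[ℤ_[p]] O, PowerSeries.map (σ : O →+* O) g := map_det_eq_prod e b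
  have hN0 : ∀ g, g ≠ 0 → N g ≠ 0 := by
    intro g hg h0
    have h1 := hN g
    rw [h0, map_zero] at h1
    obtain ⟨σ, -, hσ⟩ := Finset.prod_eq_zero_iff.1 h1.symm
    refine hg (PowerSeries.map_injective (σ : O →+* O) σ.injective ?_)
    rw [hσ, map_zero]
  have hfinO : Module.Finite (PowerSeries ℤ_[p]) (PowerSeries O) :=
    Module.Finite.of_basis (psBasis b)
  refine ⟨Module.Finite.trans (PowerSeries O) M, ?_, ?_⟩
  · intro m
    obtain ⟨a, ha⟩ := @htors m
    have ha0 : (a : PowerSeries O) ≠ 0 := nonZeroDivisors.coe_ne_zero a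
    refine ⟨⟨N a, mem_nonZeroDivisors_of_ne_zero (hN0 _ ha0)⟩, ?_⟩
    change N a • m = 0
    have hdvd : (a : PowerSeries O) ∣ PowerSeries.map (algebraMap ℤ_[p] O) (N a) := by
      rw [hN]
      have h1 : PowerSeries.map ((1 : O ≃ₐ[ℤ_[p]] O) : O →+* O) (a : PowerSeries O) = a := by
        ext n; simp
      conv_lhs => rw [← h1]
      exact Finset.dvd_prod_of_mem
        (fun σ : O ≃ₐ[ℤ_[p]] O => PowerSeries.map (σ : O →+* O) (a : PowerSeries O))
        (Finset.mem_univ 1)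
    obtain ⟨c, hc⟩ := hdvd
    have ha' : (a : PowerSeries O) • m = 0 := ha
    rw [hcompat, hc, mul_comm, mul_smul, ha', smul_zero]
  · obtain ⟨n, g, φ, hg, hf, hφ1, hφ2⟩ := hchar
    refine ⟨∏ i, N (g i), ?_, ?_⟩
    · rw [map_prod, hf]
      simp only [hN, map_prod]
      exact Finset.prod_comm
    · have hex : ∀ i, ∃ (h : Fin (Module.finrank ℤ_[p] O) → PowerSeries ℤ_[p])
          (θ : (PowerSeries O ⧸ Ideal.span {g i}) →ₗ[PowerSeries ℤ_[p]]
            (∀ j, PowerSeries ℤ_[p] ⧸ Ideal.span {h j})),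
          (∀ j, h j ≠ 0) ∧ ∏ j, h j = N (g i) ∧ Finite (LinearMap.ker θ) ∧
          Finite ((∀ j, PowerSeries ℤ_[p] ⧸ Ideal.span {h j}) ⧸ LinearMap.range θ) := by
        intro i
        let π : (Fin (Module.finrank ℤ_[p] O) → PowerSeries ℤ_[p]) →ₗ[PowerSeries ℤ_[p]]
            (PowerSeries O ⧸ Ideal.span {g i}) :=
          ((Submodule.mkQ (Ideal.span {g i})).restrictScalars (PowerSeries ℤ_[p])) ∘ₗ
            (psBasis b).equivFun.symm.toLinearMap
        have hπ : ∀ v, π v = Submodule.Quotient.mk ((psBasis b).equivFun.symm v) := fun _ => rfl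
        refine exists_pseudo (fun a c ha _ hac => lambda_finite_quot p a c ha hac)
          (Algebra.leftMulMatrix (psBasis b) (g i)) (hN0 _ (hg i)) π ?_ ?_
        · exact (Submodule.mkQ_surjective _).comp (psBasis b).equivFun.symm.surjective
        · intro x
          have hmv : ∀ y, (Algebra.leftMulMatrix (psBasis b) (g i)).mulVec
              ((psBasis b).equivFun y) = (psBasis b).equivFun (g i * y) :=
            fun y => Algebra.leftMulMatrix_mulVec_repr (psBasis b) (g i) y
          rw [hπ, Submodule.Quotient.mk_eq_zero, Ideal.mem_span_singleton]
          constructor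
          · rintro ⟨y, hy⟩
            refine ⟨(psBasis b).equivFun y, ?_⟩
            rw [hmv, ← hy, LinearEquiv.apply_symm_apply]
          · rintro ⟨y, rfl⟩
            obtain ⟨y, rfl⟩ := (psBasis b).equivFun.surjective y
            rw [hmv, LinearEquiv.symm_apply_apply]
            exact dvd_mul_right _ _
      choose h θ hh0 hprod hker hcoker using hex
      let E : Fin (Fintype.card (Σ _ : Fin n, Fin (Module.finrank ℤ_[p] O))) ≃
          (Σ _ : Fin n, Fin (Module.finrank ℤ_[p] O)) := (Fintype.equivFin _).symm
      let φ' := φ.restrictScalars (PowerSeries ℤ_[p])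
      have hφ'1 : Finite (LinearMap.ker φ') := hφ1
      have hφ'2 : Finite ((∀ i, PowerSeries O ⧸ Ideal.span {g i}) ⧸ LinearMap.range φ') :=
        Finite.of_equiv _
          (Submodule.Quotient.restrictScalarsEquiv (PowerSeries ℤ_[p])
            (LinearMap.range φ)).symm.toEquiv
      let Θ : (∀ i, PowerSeries O ⧸ Ideal.span {g i}) →ₗ[PowerSeries ℤ_[p]]
          (∀ i j, PowerSeries ℤ_[p] ⧸ Ideal.span {h i j}) :=
        LinearMap.pi fun i => θ i ∘ₗ LinearMap.proj i
      have hΘ1 : Finite (LinearMap.ker Θ) := finite_ker_pi θ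
      have hΘ2 : Finite (_ ⧸ LinearMap.range Θ) := finite_coker_pi θ
      let L1 : (∀ x : (Σ _ : Fin n, Fin (Module.finrank ℤ_[p] O)),
            PowerSeries ℤ_[p] ⧸ Ideal.span {h x.1 x.2}) ≃ₗ[PowerSeries ℤ_[p]]
          (∀ i j, PowerSeries ℤ_[p] ⧸ Ideal.span {h i j}) :=
        LinearEquiv.piCurry (PowerSeries ℤ_[p])
          (fun i j => PowerSeries ℤ_[p] ⧸ Ideal.span {h i j})
      let L2 : (∀ k, PowerSeries ℤ_[p] ⧸ Ideal.span {h (E k).1 (E k).2}) ≃ₗ[PowerSeries ℤ_[p]]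
          (∀ x : (Σ _ : Fin n, Fin (Module.finrank ℤ_[p] O)),
            PowerSeries ℤ_[p] ⧸ Ideal.span {h x.1 x.2}) :=
        LinearEquiv.piCongrLeft (PowerSeries ℤ_[p])
          (fun x : (Σ _ : Fin n, Fin (Module.finrank ℤ_[p] O)) =>
            PowerSeries ℤ_[p] ⧸ Ideal.span {h x.1 x.2}) E
      let L := (L2.trans L1).symm
      have hL1 : Finite (LinearMap.ker L.toLinearMap) := by
        rw [LinearEquiv.ker]; infer_instance
      have hL2 : Finite (_ ⧸ LinearMap.range L.toLinearMap) := by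
        rw [LinearEquiv.range]; infer_instance
      have hc1 := finite_ker_comp φ' Θ
      have hc2 := finite_coker_comp φ' Θ
      refine ⟨_, fun k => h (E k).1 (E k).2, L.toLinearMap ∘ₗ (Θ ∘ₗ φ'),
        fun k => hh0 _ _, ?_, finite_ker_comp _ _, finite_coker_comp _ _⟩
      rw [E.prod_comp (fun x => h x.1 x.2), Fintype.prod_sigma]
      exact Finset.prod_congr rfl fun i _ => (hprod i).symm
end

section
/- Let Λ = ℤ_p[[T]] and let M be a finitely generated torsion Λ-module with Iwasawa invariants λ and μ such that M/ω_n M is finite for all n, where ω_n(T) = (1+T)^{p^n} − 1. Then there exist an integer ν and an integer N such that for all n ≥ N, the order of M/ω_n M equals p^{λ n + μ p^n + ν}. -/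
open PowerSeries

/-- `ω_n = (1+T)^(p^n) - 1` in the Iwasawa algebra `Λ = ℤ_p[[T]]`. -/
noncomputable def iwasawaOmega (p : ℕ) [Fact p.Prime] (n : ℕ) : PowerSeries ℤ_[p] :=
  (1 + PowerSeries.X) ^ (p ^ n) - 1

/-- `f = p^μ · P · u` with `P` a distinguished polynomial of degree `λ` and `u` a unit:
this expresses that the Iwasawa invariants of the characteristic series `f` are `λ, μ`. -/
def HasIwasawaInvariants (p : ℕ) [Fact p.Prime] (f : PowerSeries ℤ_[p])
    (lam mu : ℕ) : Prop :=
  ∃ (P : Polynomial ℤ_[p]) (u : (PowerSeries ℤ_[p])ˣ),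
    P.Monic ∧ P.natDegree = lam ∧
    (∀ i < lam, P.coeff i ∈ Ideal.span {(p : ℤ_[p])}) ∧
    f = (p : PowerSeries ℤ_[p]) ^ mu * (P : PowerSeries ℤ_[p]) * u

namespace IwasawaAux

section General

/-- index formula for a map with commuting endomorphisms -/
theorem index_formula {M E : Type*} [AddCommGroup M] [AddCommGroup E] (φ : M →+ E)
    (wM : M →+ M) (wE : E →+ E) (hc : ∀ x, φ (wM x) = wE (φ x))
    (hinj : Function.Injective wE) (hfi : φ.range.index ≠ 0) :
    wM.range.index = wM.range.relIndex φ.ker * wE.range.index := by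
  have hmap : wM.range.map φ = φ.range.map wE := by
    ext y
    simp only [AddSubgroup.mem_map, AddMonoidHom.mem_range]
    constructor
    · rintro ⟨_, ⟨x, rfl⟩, rfl⟩
      exact ⟨_, ⟨x, rfl⟩, (hc x).symm⟩
    · rintro ⟨_, ⟨x, rfl⟩, rfl⟩
      exact ⟨_, ⟨x, rfl⟩, hc x⟩
  have hle1 : φ.range.map wE ≤ φ.range := by
    rw [← hmap]; rintro _ ⟨x, _, rfl⟩; exact ⟨x, rfl⟩
  have hle2 : φ.range.map wE ≤ wE.range := by
    rintro _ ⟨x, _, rfl⟩; exact ⟨x, rfl⟩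
  have h1 := AddSubgroup.relIndex_mul_index hle1
  have h2 := AddSubgroup.relIndex_mul_index hle2
  have h3 : (φ.range.map wE).relIndex wE.range = φ.range.index := by
    rw [← AddSubgroup.index_comap, AddSubgroup.comap_map_eq_self_of_injective hinj]
  have h4 : (φ.range.map wE).relIndex φ.range = wE.range.index := by
    rw [h3] at h2
    rw [← h2, mul_comm] at h1
    exact Nat.eq_of_mul_eq_mul_left (Nat.pos_of_ne_zero hfi) h1
  have h5 : (wM.range ⊔ φ.ker).index = wE.range.index := by
    rw [← AddSubgroup.comap_map_eq, AddSubgroup.index_comap, hmap, h4]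
  rw [← h5, ← AddSubgroup.relIndex_mul_index (le_sup_left : wM.range ≤ wM.range ⊔ φ.ker),
    AddSubgroup.relIndex_sup_left]

theorem index_ne_zero {M E : Type*} [AddCommGroup M] [AddCommGroup E] (φ : M →+ E)
    (wM : M →+ M) (wE : E →+ E) (hc : ∀ x, φ (wM x) = wE (φ x))
    (hfi : φ.range.index ≠ 0) (hM : wM.range.index ≠ 0) : wE.range.index ≠ 0 := by
  have hle1 : wM.range.map φ ≤ φ.range := by
    rintro _ ⟨x, _, rfl⟩; exact ⟨x, rfl⟩
  have hle2 : wM.range.map φ ≤ wE.range := by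
    rintro _ ⟨_, ⟨x, rfl⟩, rfl⟩; exact ⟨φ x, (hc x).symm⟩
  have h1 := AddSubgroup.relIndex_mul_index hle1
  rw [← AddSubgroup.index_comap] at h1
  have h2 : ((wM.range.map φ).comap φ).index ≠ 0 :=
    ne_zero_of_dvd_ne_zero hM (AddSubgroup.index_dvd_of_le (AddSubgroup.le_comap_map _ _))
  have h3 : (wM.range.map φ).index ≠ 0 := by rw [← h1]; exact mul_ne_zero h2 hfi
  exact ne_zero_of_dvd_ne_zero h3 (AddSubgroup.index_dvd_of_le hle2)

variable {R : Type*} [CommRing R]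

/-- index of the ideal `(a, b)` -/
noncomputable def idx (a b : R) : ℕ := (Ideal.span {a, b} : Ideal R).toAddSubgroup.index

/-- `b` is regular modulo `a` -/
def Reg (a b : R) : Prop := ∀ x, a ∣ b * x → a ∣ x

theorem idx_comm (a b : R) : idx a b = idx b a := by
  unfold idx; rw [Set.pair_comm]

theorem idx_mul {a b : R} (c : R) (h : Reg a b) : idx a (b * c) = idx a b * idx a c := by
  unfold idx
  have hle : (Ideal.span {a, b * c} : Ideal R).toAddSubgroup
      ≤ (Ideal.span {a, b} : Ideal R).toAddSubgroup := by
    intro x hx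
    rw [Submodule.mem_toAddSubgroup, Ideal.mem_span_pair] at hx ⊢
    obtain ⟨u, v, rfl⟩ := hx
    exact ⟨u, v * c, by ring⟩
  have h1 := AddSubgroup.relIndex_mul_index hle
  have h2 : (Ideal.span {a, c} : Ideal R).toAddSubgroup
      = (Ideal.span {a, b * c} : Ideal R).toAddSubgroup.comap (AddMonoidHom.mulLeft b) := by
    ext x
    rw [AddSubgroup.mem_comap, Submodule.mem_toAddSubgroup, Submodule.mem_toAddSubgroup,
      Ideal.mem_span_pair, Ideal.mem_span_pair]
    simp only [AddMonoidHom.coe_mulLeft]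
    constructor
    · rintro ⟨u, v, rfl⟩
      exact ⟨b * u, v, by ring⟩
    · rintro ⟨u, v, e⟩
      obtain ⟨w, hw⟩ := h (x - v * c) ⟨u, by linear_combination -e⟩
      exact ⟨w, v, by linear_combination -hw⟩
  have h3 : (Ideal.span {a, b} : Ideal R).toAddSubgroup =
      (AddMonoidHom.mulLeft b).range ⊔ (Ideal.span {a, b * c} : Ideal R).toAddSubgroup := by
    apply le_antisymm _ (sup_le _ hle)
    · intro x hx
      rw [Submodule.mem_toAddSubgroup, Ideal.mem_span_pair] at hx
      obtain ⟨u, v, rfl⟩ := hx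
      rw [AddSubgroup.mem_sup]
      refine ⟨b * v, ⟨v, rfl⟩, u * a, ?_, by ring⟩
      rw [Submodule.mem_toAddSubgroup, Ideal.mem_span_pair]
      exact ⟨u, 0, by ring⟩
    · rintro _ ⟨v, rfl⟩
      rw [Submodule.mem_toAddSubgroup, Ideal.mem_span_pair]
      exact ⟨0, v, by simp [mul_comm]⟩
  rw [h2, AddSubgroup.index_comap, ← h1, mul_comm]
  congr 1
  conv_lhs => rw [h3, AddSubgroup.relIndex_sup_right]

theorem Reg.mul {a b c : R} (hb : Reg a b) (hc : Reg a c) : Reg a (b * c) := by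
  intro x hx
  rw [mul_assoc] at hx
  exact hc _ (hb _ hx)

theorem Reg.of_mul_right {a b c : R} (h : Reg a (b * c)) : Reg a c := by
  intro x hx
  apply h; rw [mul_assoc]; exact hx.mul_left b

theorem Reg.one (a : R) : Reg a 1 := fun x hx => by simpa using hx

theorem Reg.prod {a : R} {ι : Type*} (s : Finset ι) (g : ι → R) (h : ∀ i ∈ s, Reg a (g i)) :
    Reg a (∏ i ∈ s, g i) := by
  classical
  induction s using Finset.induction_on with
  | empty => simpa using Reg.one a
  | insert i s hi ih =>
    rw [Finset.prod_insert hi]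
    exact (h _ (by simp)).mul (ih fun j hj => h j (by simp [hj]))

theorem idx_unit (a : R) {b : R} (hb : IsUnit b) : idx a b = 1 := by
  unfold idx
  have : (Ideal.span {a, b} : Ideal R) = ⊤ :=
    Ideal.eq_top_of_isUnit_mem _ (Ideal.subset_span (by simp)) hb
  rw [this]; simp

theorem idx_prod {a : R} {ι : Type*} (s : Finset ι) (g : ι → R) (h : ∀ i ∈ s, Reg a (g i)) :
    idx a (∏ i ∈ s, g i) = ∏ i ∈ s, idx a (g i) := by
  classical
  induction s using Finset.induction_on with
  | empty => simpa using idx_unit a isUnit_one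
  | insert i s hi ih =>
    rw [Finset.prod_insert hi, Finset.prod_insert hi, idx_mul _ (h _ (by simp)),
      ih fun j hj => h j (by simp [hj])]

theorem Reg.symm [IsDomain R] {a b : R} (ha : a ≠ 0) (h : Reg a b) : Reg b a := by
  rintro x ⟨y, hy⟩
  obtain ⟨z, rfl⟩ := h y ⟨x, hy.symm⟩
  exact ⟨z, mul_left_cancel₀ ha (by linear_combination hy)⟩

theorem reg_of_idx {a b : R} (hab : idx a b ≠ 0) (hn : ∀ n : ℕ, n ≠ 0 → Reg a (n : R)) :
    Reg a b := by
  intro x hx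
  have h1 : idx a b • (1 : R) ∈ (Ideal.span {a, b} : Ideal R).toAddSubgroup :=
    AddSubgroup.nsmul_index_mem _ _
  rw [Submodule.mem_toAddSubgroup, Ideal.mem_span_pair] at h1
  obtain ⟨u, v, h⟩ := h1
  obtain ⟨y, hy⟩ := hx
  apply hn _ hab
  refine ⟨u * x + v * y, ?_⟩
  rw [nsmul_eq_mul, mul_one] at h
  rw [← h]
  linear_combination v * hy

/-- index of `ω` on a cyclic module -/
theorem index_cyclic (g w : R) :
    (LinearMap.range (LinearMap.lsmul R (R ⧸ Ideal.span {g}) w)).toAddSubgroup.index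
      = idx w g := by
  unfold idx
  rw [← AddSubgroup.index_comap_of_surjective _
    (f := (Ideal.Quotient.mk (Ideal.span {g})).toAddMonoidHom) Ideal.Quotient.mk_surjective]
  congr 1
  ext x
  simp only [AddSubgroup.mem_comap, Submodule.mem_toAddSubgroup, LinearMap.mem_range,
    LinearMap.lsmul_apply, Ideal.mem_span_pair]
  constructor
  · rintro ⟨y, hy⟩
    obtain ⟨y, rfl⟩ := Ideal.Quotient.mk_surjective y
    have : Ideal.Quotient.mk (Ideal.span {g}) (w * y) = Ideal.Quotient.mk (Ideal.span {g}) x := hy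
    rw [Ideal.Quotient.mk_eq_mk_iff_sub_mem, Ideal.mem_span_singleton] at this
    obtain ⟨z, hz⟩ := this
    exact ⟨y, -z, by linear_combination hz⟩
  · rintro ⟨u, v, rfl⟩
    refine ⟨Ideal.Quotient.mk _ u, ?_⟩
    change Ideal.Quotient.mk (Ideal.span {g}) (w * u)
      = Ideal.Quotient.mk (Ideal.span {g}) (u * w + v * g)
    rw [Ideal.Quotient.mk_eq_mk_iff_sub_mem, Ideal.mem_span_singleton]
    exact ⟨-v, by ring⟩

theorem index_pi {n : ℕ} {N : Fin n → Type*} [∀ i, AddCommGroup (N i)] [∀ i, Module R (N i)]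
    (w : R) :
    (LinearMap.range (LinearMap.lsmul R (∀ i, N i) w)).toAddSubgroup.index
      = ∏ i, (LinearMap.range (LinearMap.lsmul R (N i) w)).toAddSubgroup.index := by
  have h : LinearMap.range (LinearMap.lsmul R (∀ i, N i) w)
      = Submodule.pi Set.univ fun i => LinearMap.range (LinearMap.lsmul R (N i) w) := by
    ext x
    simp only [LinearMap.mem_range, LinearMap.lsmul_apply, Submodule.mem_pi, Set.mem_univ,
      true_imp_iff]
    constructor
    · rintro ⟨y, rfl⟩ i
      exact ⟨y i, rfl⟩
    · intro h
      choose y hy using h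
      exact ⟨y, funext hy⟩
  rw [h]
  have e := Submodule.quotientPi fun i => LinearMap.range (LinearMap.lsmul R (N i) w)
  have := Nat.card_congr e.toEquiv
  rw [Nat.card_pi] at this
  exact this

end General

section Padic

variable (p : ℕ) [hp : Fact p.Prime]

theorem card_pow (A : Type*) [AddCommGroup A] [Module (PowerSeries ℤ_[p]) A] [Finite A] :
    ∃ k, Nat.card A = p ^ k := by
  refine ⟨_, Nat.eq_prime_pow_of_unique_prime_dvd (Nat.card_pos.ne') ?_⟩
  intro q hq hqd
  by_contra hne
  have : Fact q.Prime := ⟨hq⟩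
  obtain ⟨x, hx⟩ := exists_prime_addOrderOf_dvd_card' q hqd
  have hu : IsUnit ((q : ℕ) : PowerSeries ℤ_[p]) := by
    have h1 : IsUnit ((q : ℕ) : ℤ_[p]) := by
      rw [PadicInt.isUnit_iff]
      have := (PadicInt.norm_natCast_eq_one_iff (p := p) (n := q)).2
        ((Nat.coprime_primes hp.out hq).2 (Ne.symm hne))
      exact this
    have := h1.map (PowerSeries.C (R := ℤ_[p]))
    simpa using this
  have h0 : ((q : ℕ) : PowerSeries ℤ_[p]) • x = 0 := by
    rw [Nat.cast_smul_eq_nsmul, ← hx, addOrderOf_nsmul_eq_zero]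
  have hx0 : x = 0 := by
    obtain ⟨u, hu⟩ := hu
    rw [← hu] at h0
    have := congrArg (fun y => (↑u⁻¹ : PowerSeries ℤ_[p]) • y) h0
    simpa [smul_smul] using this
  rw [hx0, addOrderOf_zero] at hx
  exact hq.one_lt.ne hx

theorem idx_pow {a b : PowerSeries ℤ_[p]} (h : idx a b ≠ 0) : ∃ k, idx a b = p ^ k := by
  have e : idx a b = Nat.card (PowerSeries ℤ_[p] ⧸ Ideal.span {a, b}) := rfl
  rw [e] at h ⊢
  have := Nat.finite_of_card_ne_zero h
  exact card_pow p _

instance : IsAdicComplete (Ideal.span {(p : ℤ_[p])}) ℤ_[p] := by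
  rw [← PadicInt.maximalIdeal_eq_span_p]; infer_instance

theorem exists_equiv {Q : Polynomial ℤ_[p]} (hQ : Q.IsDistinguishedAt (Ideal.span {(p : ℤ_[p])})) :
    Nonempty ((PowerSeries ℤ_[p] ⧸ Ideal.span {(Q : PowerSeries ℤ_[p])})
      ≃ₗ[ℤ_[p]] (Fin Q.natDegree → ℤ_[p])) := by
  have b := (AdjoinRoot.powerBasis' hQ.monic).basis
  rw [AdjoinRoot.powerBasis'_dim] at b
  exact ⟨hQ.algEquivQuotient.symm.toLinearEquiv.trans b.equivFun⟩

theorem reg_nat {Q : Polynomial ℤ_[p]} (hQ : Q.IsDistinguishedAt (Ideal.span {(p : ℤ_[p])}))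
    (n : ℕ) (hn : n ≠ 0) : Reg (Q : PowerSeries ℤ_[p]) (n : PowerSeries ℤ_[p]) := by
  obtain ⟨e⟩ := exists_equiv p hQ
  intro x hx
  rw [← Ideal.mem_span_singleton, ← Ideal.Quotient.eq_zero_iff_mem] at hx ⊢
  apply e.injective
  have h2 : n • e (Ideal.Quotient.mk _ x) = 0 := by
    rw [← map_nsmul, ← map_nsmul, nsmul_eq_mul, hx, map_zero]
  rw [map_zero]
  funext i
  have h3 := congrFun h2 i
  simpa [hn] using h3

theorem index_padic :
    (LinearMap.range (LinearMap.lsmul ℤ_[p] ℤ_[p] (p : ℤ_[p]))).toAddSubgroup.index = p := by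
  have h : LinearMap.range (LinearMap.lsmul ℤ_[p] ℤ_[p] (p : ℤ_[p]))
      = IsLocalRing.maximalIdeal ℤ_[p] := by
    rw [PadicInt.maximalIdeal_eq_span_p]
    ext x
    simp [Ideal.mem_span_singleton, dvd_def, eq_comm]
  rw [h]
  have := Nat.card_congr (PadicInt.residueField (p := p)).toEquiv
  rw [Nat.card_zmod] at this
  exact this

theorem idx_p {Q : Polynomial ℤ_[p]} (hQ : Q.IsDistinguishedAt (Ideal.span {(p : ℤ_[p])})) :
    idx (p : PowerSeries ℤ_[p]) (Q : PowerSeries ℤ_[p]) = p ^ Q.natDegree := by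
  obtain ⟨e⟩ := exists_equiv p hQ
  rw [← index_cyclic]
  have h1 := index_pi (R := ℤ_[p]) (n := Q.natDegree) (N := fun _ => ℤ_[p]) (p : ℤ_[p])
  simp only [index_padic, Finset.prod_const, Finset.card_univ, Fintype.card_fin] at h1
  have h2 := AddSubgroup.index_comap_of_surjective
    (LinearMap.range (LinearMap.lsmul ℤ_[p] (Fin Q.natDegree → ℤ_[p]) (p : ℤ_[p]))).toAddSubgroup
    (f := e.toAddEquiv.toAddMonoidHom) e.surjective
  rw [← h1, ← h2]
  congr 1
  ext x
  simp only [AddSubgroup.mem_comap, Submodule.mem_toAddSubgroup, LinearMap.mem_range,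
    LinearMap.lsmul_apply]
  constructor
  · rintro ⟨y, rfl⟩
    refine ⟨e y, ?_⟩
    rw [Nat.cast_smul_eq_nsmul, Nat.cast_smul_eq_nsmul]
    exact (map_nsmul e p y).symm
  · rintro ⟨y, hy⟩
    refine ⟨e.symm y, e.injective ?_⟩
    rw [Nat.cast_smul_eq_nsmul] at hy ⊢
    rw [map_nsmul, e.apply_symm_apply, hy]
    rfl

theorem omega_poly (n : ℕ) : ∃ Q : Polynomial ℤ_[p],
    Q.IsDistinguishedAt (Ideal.span {(p : ℤ_[p])}) ∧ Q.natDegree = p ^ n ∧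
    iwasawaOmega p n = (Q : PowerSeries ℤ_[p]) := by
  have hpn : 0 < p ^ n := pow_pos hp.out.pos n
  have hm : ((1 + Polynomial.X : Polynomial ℤ_[p]) ^ p ^ n).Monic := by
    rw [add_comm]; exact (Polynomial.monic_X_add_C (1 : ℤ_[p])).pow _
  have hd : ((1 + Polynomial.X : Polynomial ℤ_[p]) ^ p ^ n).natDegree = p ^ n := by
    rw [add_comm, show (1 : Polynomial ℤ_[p]) = Polynomial.C 1 by simp, Polynomial.natDegree_pow,
      Polynomial.natDegree_X_add_C, mul_one]
  have hlt : (1 : Polynomial ℤ_[p]).degree < ((1 + Polynomial.X : Polynomial ℤ_[p]) ^ p ^ n).degree := by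
    rw [Polynomial.degree_eq_natDegree hm.ne_zero, hd, Polynomial.degree_one]
    exact_mod_cast hpn
  have hd' : ((1 + Polynomial.X : Polynomial ℤ_[p]) ^ p ^ n - 1).natDegree = p ^ n := by
    exact (Polynomial.natDegree_eq_of_degree_eq
      (Polynomial.degree_sub_eq_left_of_degree_lt hlt)).trans hd
  refine ⟨(1 + Polynomial.X) ^ p ^ n - 1, ⟨⟨?_⟩, hm.sub_of_left hlt⟩, hd', ?_⟩
  · intro i hi
    rw [hd'] at hi
    rw [Polynomial.coeff_sub, Polynomial.coeff_one_add_X_pow, Polynomial.coeff_one,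
      Ideal.mem_span_singleton]
    by_cases h0 : i = 0
    · subst h0; simp
    · rw [if_neg h0, sub_zero]
      exact_mod_cast Nat.cast_dvd_cast (hp.out.dvd_choose_pow h0 hi.ne)
  · simp [iwasawaOmega]

theorem omega_ne_zero (n : ℕ) : iwasawaOmega p n ≠ 0 := by
  obtain ⟨Q, hQ, -, h⟩ := omega_poly p n
  rw [h]
  exact_mod_cast hQ.monic.ne_zero

/-- `ω_{n+1} = ω_n ν_n`, `ν_n = p + ω_n h`. -/
theorem omega_succ (n : ℕ) : ∃ h : PowerSeries ℤ_[p],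
    iwasawaOmega p (n + 1) = iwasawaOmega p n * (p + iwasawaOmega p n * h) := by
  set w := iwasawaOmega p n with hw
  have h1 : iwasawaOmega p (n + 1) = (1 + w) ^ p - 1 := by
    rw [hw]; unfold iwasawaOmega; rw [pow_succ, pow_mul]; ring
  have h2 : (1 + w) ^ p - 1 = w * ∑ i ∈ Finset.range p, (1 + w) ^ i := by
    have := mul_geom_sum (1 + w) p
    rw [← this]; ring
  have h3 : w ∣ ∑ i ∈ Finset.range p, (1 + w) ^ i - p := by
    have : (∑ i ∈ Finset.range p, (1 + w) ^ i - p : PowerSeries ℤ_[p])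
        = ∑ i ∈ Finset.range p, ((1 + w) ^ i - 1) := by simp
    rw [this]
    refine Finset.dvd_sum fun i _ => ?_
    have := sub_one_dvd_pow_sub_one (1 + w) i
    simpa using this
  obtain ⟨h, hh⟩ := h3
  exact ⟨h, by rw [h1, h2]; linear_combination w * hh⟩

theorem constCoeff_omega (n : ℕ) : PowerSeries.constantCoeff (iwasawaOmega p n) = 0 := by
  simp [iwasawaOmega]

theorem dist_eq {P : Polynomial ℤ_[p]} (hP : P.IsDistinguishedAt (Ideal.span {(p : ℤ_[p])})) :
    ∃ h : PowerSeries ℤ_[p], (P : PowerSeries ℤ_[p]) = PowerSeries.X ^ P.natDegree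
      + (p : PowerSeries ℤ_[p]) * h := by
  have : Polynomial.C (p : ℤ_[p]) ∣ P - Polynomial.X ^ P.natDegree := by
    rw [Polynomial.C_dvd_iff_dvd_coeff]
    intro i
    rw [Polynomial.coeff_sub, Polynomial.coeff_X_pow]
    rcases lt_trichotomy i P.natDegree with h | h | h
    · rw [if_neg h.ne, sub_zero, ← Ideal.mem_span_singleton]; exact hP.mem h
    · subst h; simp [hP.monic.leadingCoeff]
    · rw [if_neg h.ne', Polynomial.coeff_eq_zero_of_natDegree_lt h]; simp
  obtain ⟨h, hh⟩ := this
  refine ⟨h, ?_⟩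
  have h2 := congrArg (fun q : Polynomial ℤ_[p] => (q : PowerSeries ℤ_[p])) hh
  simp only [Polynomial.coe_sub, Polynomial.coe_mul, Polynomial.coe_pow, Polynomial.coe_X,
    Polynomial.coe_C] at h2
  rw [map_natCast] at h2
  linear_combination h2

/-- `ω_n ∈ p 𝔪 + (P)` for large `n`. -/
theorem omega_small {P : Polynomial ℤ_[p]} (hP : P.IsDistinguishedAt (Ideal.span {(p : ℤ_[p])})) :
    ∃ n0, ∀ n ≥ n0, ∃ m k : PowerSeries ℤ_[p], ¬ IsUnit (PowerSeries.constantCoeff m) ∧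
      iwasawaOmega p n = p * m + P * k := by
  obtain ⟨h, hh⟩ := dist_eq p hP
  refine ⟨P.natDegree + 1, fun n hn => ?_⟩
  obtain ⟨n, rfl⟩ : ∃ j, n = j + 1 := ⟨n - 1, by omega⟩
  have hn' : P.natDegree ≤ p ^ n := by
    have := (Nat.lt_pow_self hp.out.one_lt : n < p ^ n)
    omega
  obtain ⟨r, hr⟩ := exists_add_pow_prime_pow_eq hp.out (1 : PowerSeries ℤ_[p]) PowerSeries.X n
  have h1 : iwasawaOmega p n = PowerSeries.X ^ p ^ n
      + (p : PowerSeries ℤ_[p]) * (PowerSeries.X * r) := by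
    unfold iwasawaOmega; rw [hr]; ring
  obtain ⟨j, hj⟩ := Nat.exists_eq_add_of_le hn'
  have h2 : iwasawaOmega p n = (p : PowerSeries ℤ_[p]) * (PowerSeries.X * r - h * PowerSeries.X ^ j)
      + (P : PowerSeries ℤ_[p]) * PowerSeries.X ^ j := by
    rw [h1, hh, hj]; ring
  obtain ⟨s, hs⟩ := omega_succ p n
  refine ⟨(PowerSeries.X * r - h * PowerSeries.X ^ j) * ((p : PowerSeries ℤ_[p]) + iwasawaOmega p n * s),
    PowerSeries.X ^ j * ((p : PowerSeries ℤ_[p]) + iwasawaOmega p n * s), ?_, ?_⟩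
  · intro hu
    rw [map_mul, map_add, map_mul, constCoeff_omega, zero_mul, add_zero, map_natCast] at hu
    have := isUnit_of_mul_isUnit_right hu
    exact PadicInt.prime_p.not_unit this
  · rw [hs]
    generalize ((p : PowerSeries ℤ_[p]) + iwasawaOmega p n * s) = y
    rw [h2]; ring

theorem idx_step {P : Polynomial ℤ_[p]} (hP : P.IsDistinguishedAt (Ideal.span {(p : ℤ_[p])}))
    (hreg : ∀ n, Reg (P : PowerSeries ℤ_[p]) (iwasawaOmega p n)) :
    ∃ n0, ∀ n ≥ n0, idx (P : PowerSeries ℤ_[p]) (iwasawaOmega p (n + 1))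
      = idx (P : PowerSeries ℤ_[p]) (iwasawaOmega p n) * p ^ P.natDegree := by
  obtain ⟨n0, h0⟩ := omega_small p hP
  refine ⟨n0, fun n hn => ?_⟩
  obtain ⟨m, k, hm, hmk⟩ := h0 n hn
  obtain ⟨h, hh⟩ := omega_succ p n
  rw [hh, idx_mul _ (hreg n), ← idx_p p hP, idx_comm (p : PowerSeries ℤ_[p])]
  congr 1
  have hu : IsUnit (1 + m * h) := by
    rw [PowerSeries.isUnit_iff_constantCoeff, map_add, map_mul, map_one]
    by_contra hc
    have h1 : PowerSeries.constantCoeff m * PowerSeries.constantCoeff h ∈ nonunits ℤ_[p] :=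
      fun hu => hm (isUnit_of_mul_isUnit_left hu)
    have := IsLocalRing.nonunits_add hc ((IsLocalRing.mem_maximalIdeal _).1
      (neg_mem ((IsLocalRing.mem_maximalIdeal _).2 h1)))
    simp at this
  obtain ⟨u, hu⟩ := hu
  have hv : (1 + m * h) * (↑u⁻¹ : PowerSeries ℤ_[p]) = 1 := by rw [← hu]; simp
  unfold idx
  congr 2
  apply le_antisymm
  · rw [Ideal.span_le]
    rintro x (rfl | rfl)
    · exact Ideal.subset_span (by simp)
    · rw [SetLike.mem_coe, Ideal.mem_span_pair]
      exact ⟨k * h, 1 + m * h, by rw [hmk]; ring⟩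
  · rw [Ideal.span_le]
    rintro x (rfl | rfl)
    · exact Ideal.subset_span (by simp)
    · rw [SetLike.mem_coe, Ideal.mem_span_pair]
      refine ⟨-(k * h * (↑u⁻¹ : PowerSeries ℤ_[p])), (↑u⁻¹ : PowerSeries ℤ_[p]), ?_⟩
      rw [hmk]; linear_combination (p : PowerSeries ℤ_[p]) * hv

end Padic

end IwasawaAux

/-- Iwasawa's asymptotic formula. If `M` is a finitely generated torsion
`Λ = ℤ_p[[T]]`-module with invariants `λ, μ` and all coinvariants `M/ω_n M` finite, then
there are `ν ∈ ℤ` and `N` such that `|M/ω_n M| = p^(λ n + μ p^n + ν)` for all `n ≥ N`. -/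
theorem iwasawa_asymptotic_formula (p : ℕ) [Fact p.Prime]
    (M : Type*) [AddCommGroup M] [Module (PowerSeries ℤ_[p]) M]
    [Module.Finite (PowerSeries ℤ_[p]) M]
    (htors : Module.IsTorsion (PowerSeries ℤ_[p]) M)
    (f : PowerSeries ℤ_[p]) (hchar : IsCharSeries (PowerSeries ℤ_[p]) M f)
    (lam mu : ℕ) (hinv : HasIwasawaInvariants p f lam mu)
    (hfin : ∀ n : ℕ, Finite
      (M ⧸ LinearMap.range (LinearMap.lsmul (PowerSeries ℤ_[p]) M (iwasawaOmega p n)))) :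
    ∃ (nu : ℤ) (N : ℕ), ∀ n ≥ N,
      (Nat.card
        (M ⧸ LinearMap.range (LinearMap.lsmul (PowerSeries ℤ_[p]) M (iwasawaOmega p n))) : ℚ)
        = (p : ℚ) ^ ((lam : ℤ) * n + (mu : ℤ) * p ^ n + nu) := by
  obtain ⟨r, g, φ, hg0, hfg, hker, hcok⟩ := hchar
  obtain ⟨P, u, hPm, hPd, hPc, hf⟩ := hinv
  have hp : p.Prime := Fact.out
  have hP : P.IsDistinguishedAt (Ideal.span {(p : ℤ_[p])}) :=
    ⟨⟨fun {i} hi => hPc i (hPd ▸ hi)⟩, hPm⟩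
  have hcok' : φ.toAddMonoidHom.range.index ≠ 0 := by
    have : Nat.card ((∀ i, PowerSeries ℤ_[p] ⧸ Ideal.span {g i}) ⧸ LinearMap.range φ) ≠ 0 :=
      Nat.card_pos.ne'
    exact this
  have hM : ∀ n, (LinearMap.lsmul (PowerSeries ℤ_[p]) M
      (iwasawaOmega p n)).toAddMonoidHom.range.index ≠ 0 := by
    intro n
    have := hfin n
    have : Nat.card (M ⧸ LinearMap.range (LinearMap.lsmul (PowerSeries ℤ_[p]) M
      (iwasawaOmega p n))) ≠ 0 := Nat.card_pos.ne'
    exact this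
  have hcomm : ∀ n (x : M), φ.toAddMonoidHom ((LinearMap.lsmul (PowerSeries ℤ_[p]) M
      (iwasawaOmega p n)).toAddMonoidHom x) = (LinearMap.lsmul (PowerSeries ℤ_[p])
      (∀ i, PowerSeries ℤ_[p] ⧸ Ideal.span {g i}) (iwasawaOmega p n)).toAddMonoidHom
        (φ.toAddMonoidHom x) := fun n x => φ.map_smul _ _
  have hEidx : ∀ n, (LinearMap.lsmul (PowerSeries ℤ_[p])
      (∀ i, PowerSeries ℤ_[p] ⧸ Ideal.span {g i}) (iwasawaOmega p n)).toAddMonoidHom.range.index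
      = ∏ i, IwasawaAux.idx (iwasawaOmega p n) (g i) := by
    intro n
    have h := IwasawaAux.index_pi (R := PowerSeries ℤ_[p])
      (N := fun i => PowerSeries ℤ_[p] ⧸ Ideal.span {g i}) (iwasawaOmega p n)
    simp only [IwasawaAux.index_cyclic] at h
    exact h
  have hE : ∀ n, ∏ i, IwasawaAux.idx (iwasawaOmega p n) (g i) ≠ 0 := by
    intro n
    rw [← hEidx]
    exact IwasawaAux.index_ne_zero φ.toAddMonoidHom _ _ (hcomm n) hcok' (hM n)
  have hnat : ∀ n m : ℕ, m ≠ 0 → IwasawaAux.Reg (iwasawaOmega p n) (m : PowerSeries ℤ_[p]) := by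
    intro n m hm
    obtain ⟨Q, hQ, -, h⟩ := IwasawaAux.omega_poly p n
    rw [h]
    exact IwasawaAux.reg_nat p hQ m hm
  have hreg : ∀ n i, IwasawaAux.Reg (iwasawaOmega p n) (g i) := fun n i =>
    IwasawaAux.reg_of_idx (Finset.prod_ne_zero_iff.1 (hE n) i (Finset.mem_univ i)) (hnat n)
  have hregf : ∀ n, IwasawaAux.Reg (iwasawaOmega p n) f := fun n => by
    rw [hfg]; exact IwasawaAux.Reg.prod _ _ fun i _ => hreg n i
  have hidxf : ∀ n, IwasawaAux.idx (iwasawaOmega p n) f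
      = ∏ i, IwasawaAux.idx (iwasawaOmega p n) (g i) := fun n => by
    rw [hfg]; exact IwasawaAux.idx_prod _ _ fun i _ => hreg n i
  have hregP : ∀ n, IwasawaAux.Reg (iwasawaOmega p n) (P : PowerSeries ℤ_[p]) := fun n => by
    have h := hregf n
    rw [hf, mul_assoc, mul_comm (P : PowerSeries ℤ_[p]), ← mul_assoc] at h
    exact h.of_mul_right
  have hpp : ∀ n, IwasawaAux.idx (iwasawaOmega p n) (p : PowerSeries ℤ_[p]) = p ^ p ^ n := by
    intro n
    obtain ⟨Q, hQ, hd, h⟩ := IwasawaAux.omega_poly p n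
    rw [h, IwasawaAux.idx_comm, IwasawaAux.idx_p p hQ, hd]
  have hppow : ∀ n, IwasawaAux.idx (iwasawaOmega p n) ((p : PowerSeries ℤ_[p]) ^ mu)
      = (p ^ p ^ n) ^ mu := by
    intro n
    have h := IwasawaAux.idx_prod (a := iwasawaOmega p n) (Finset.range mu)
      (fun _ => (p : PowerSeries ℤ_[p])) (fun _ _ => hnat n p hp.ne_zero)
    simpa [hpp] using h
  have hppr : ∀ n, IwasawaAux.Reg (iwasawaOmega p n) ((p : PowerSeries ℤ_[p]) ^ mu) := by
    intro n
    have h := hnat n (p ^ mu) (pow_ne_zero _ hp.ne_zero)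
    simpa using h
  have hidxf2 : ∀ n, IwasawaAux.idx (iwasawaOmega p n) f
      = (p ^ p ^ n) ^ mu * IwasawaAux.idx (P : PowerSeries ℤ_[p]) (iwasawaOmega p n) := by
    intro n
    rw [hf, IwasawaAux.idx_mul _ ((hppr n).mul (hregP n)), IwasawaAux.idx_mul _ (hppr n),
      IwasawaAux.idx_unit _ u.isUnit, mul_one, hppow,
      IwasawaAux.idx_comm (P : PowerSeries ℤ_[p])]
  have hinj : ∀ n, Function.Injective (LinearMap.lsmul (PowerSeries ℤ_[p])
      (∀ i, PowerSeries ℤ_[p] ⧸ Ideal.span {g i}) (iwasawaOmega p n)).toAddMonoidHom := by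
    intro n
    rw [injective_iff_map_eq_zero]
    intro x hx
    funext i
    have h1 : iwasawaOmega p n • x i = 0 := congrFun hx i
    obtain ⟨y, hy⟩ := Ideal.Quotient.mk_surjective (x i)
    rw [← hy] at h1 ⊢
    have h2 : Ideal.Quotient.mk (Ideal.span {g i}) (iwasawaOmega p n * y) = 0 := h1
    rw [Ideal.Quotient.eq_zero_iff_mem, Ideal.mem_span_singleton] at h2
    exact Ideal.Quotient.eq_zero_iff_mem.2 (Ideal.mem_span_singleton.2
      ((hreg n i).symm (IwasawaAux.omega_ne_zero p n) y h2))
  -- the finite kernel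
  let S : ℕ → Submodule (PowerSeries ℤ_[p]) (LinearMap.ker φ) := fun n =>
    (LinearMap.range (LinearMap.lsmul (PowerSeries ℤ_[p]) M (iwasawaOmega p n))).comap
      (LinearMap.ker φ).subtype
  have hmain : ∀ n, Nat.card (M ⧸ LinearMap.range (LinearMap.lsmul (PowerSeries ℤ_[p]) M
      (iwasawaOmega p n))) = Nat.card (LinearMap.ker φ ⧸ S n) *
        ((p ^ p ^ n) ^ mu * IwasawaAux.idx (P : PowerSeries ℤ_[p]) (iwasawaOmega p n)) := by
    intro n
    have h := IwasawaAux.index_formula φ.toAddMonoidHom _ _ (hcomm n) (hinj n) hcok'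
    rw [hEidx, ← hidxf, hidxf2] at h
    exact h
  have hanti : Antitone S := by
    refine antitone_nat_of_succ_le fun n => Submodule.comap_mono ?_
    rintro _ ⟨x, rfl⟩
    obtain ⟨h, hh⟩ := IwasawaAux.omega_succ p n
    refine ⟨((p : PowerSeries ℤ_[p]) + iwasawaOmega p n * h) • x, ?_⟩
    simp only [LinearMap.lsmul_apply]
    rw [hh, smul_smul]
  obtain ⟨N1, hN1⟩ := IsArtinian.monotone_stabilizes
    (⟨fun n => OrderDual.toDual (S n), fun a b hab => hanti hab⟩ :
      ℕ →o (Submodule (PowerSeries ℤ_[p]) (LinearMap.ker φ))ᵒᵈ)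
  have hN1' : ∀ n ≥ N1, S n = S N1 := fun n hn => (hN1 n hn).symm
  have : Finite (LinearMap.ker φ ⧸ S N1) :=
    Finite.of_surjective _ (Submodule.mkQ_surjective (S N1))
  obtain ⟨b, hb⟩ := IwasawaAux.card_pow p (LinearMap.ker φ ⧸ S N1)
  obtain ⟨N2, hN2⟩ := IwasawaAux.idx_step p hP
    (fun n => (hregP n).symm (IwasawaAux.omega_ne_zero p n))
  have hPne : IwasawaAux.idx (P : PowerSeries ℤ_[p]) (iwasawaOmega p N2) ≠ 0 := by
    have h := hE N2
    rw [← hidxf, hidxf2] at h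
    exact right_ne_zero_of_mul h
  obtain ⟨a, ha⟩ := IwasawaAux.idx_pow p hPne
  have hiter : ∀ k, IwasawaAux.idx (P : PowerSeries ℤ_[p]) (iwasawaOmega p (N2 + k))
      = p ^ (a + lam * k) := by
    intro k
    induction k with
    | zero => simpa using ha
    | succ k ih =>
      rw [← add_assoc, hN2 _ (by omega), ih, hPd, ← pow_add]
      congr 1; ring
  refine ⟨(a : ℤ) + b - lam * N2, max N1 N2, fun n hn => ?_⟩
  obtain ⟨k, rfl⟩ := Nat.exists_eq_add_of_le (le_trans (le_max_right _ _) hn)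
  rw [hmain, hN1' _ (le_trans (le_max_left _ _) hn), hb, hiter, ← pow_mul, ← pow_add, ← pow_add,
    Nat.cast_pow, ← zpow_natCast]
  congr 1
  push_cast
  ring
end
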